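/- arXiv:1008.3135 — 2 statements merged into one kernel-verified Lean document; each statement's English description precedes it below -/
import Mathlib

section
/- Let m ≥ 4 be an integer and let A = ℂ[X, Y]/(2XY, X² + (m−1)Y^{m−2}) be the quotient of the polynomial ring in two variables by the ideal generated by the two partial derivatives of f(x, y) = x²y + y^{m−1}. Then the ℂ-vector space Der_ℂ(A, A) of ℂ-linear derivations of A has dimension m. -/
open MvPolynomial

/-- The moduli algebra of the simple singularity `D_m`, `f(x,y) = x²y + y^{m-1}`:
the quotient of `ℂ[X,Y]` by the ideal generated by `∂f/∂x = 2xy` and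
`∂f/∂y = x² + (m-1)y^{m-2}`. -/
noncomputable abbrev moduliD (m : ℕ) : Type :=
  MvPolynomial (Fin 2) ℂ ⧸
    Ideal.span {(2 : MvPolynomial (Fin 2) ℂ) * MvPolynomial.X 0 * MvPolynomial.X 1,
      (MvPolynomial.X 0 : MvPolynomial (Fin 2) ℂ) ^ 2
        + MvPolynomial.C ((m : ℂ) - 1) * MvPolynomial.X 1 ^ (m - 2)}

/-!
A derivation of `R[X, Y] ⧸ (p, q)` is determined by its values `a`, `b` on the classes `x`, `y`, and
`(a, b)` occurs exactly when the induced derivation of `R[X, Y]` kills `p` and `q`. For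
`p = 2XY` and `q = X² + cYⁿ` these conditions read `ya + xb = 0` and `2xa + cn yⁿ⁻¹b = 0`.
The quotient has the basis `1, y, …, yⁿ, x`, and in these coordinates the solutions are
`a = ct yⁿ⁻¹ + αyⁿ + (n/2)h(0) x`, `b = y h(y) + t x` with `h` a polynomial of degree `< n` and
`t`, `α` scalars: `n + 2` free parameters.
-/

open scoped Polynomial

theorem derivation_eq_zero_of_mem_span {R B M : Type*} [CommSemiring R] [CommSemiring B]
    [Algebra R B] [AddCommMonoid M] [Module R M] [Module B M] {S : Set B}
    (hM : ∀ b ∈ S, ∀ z : M, b • z = 0) {D : Derivation R B M} (hD : ∀ b ∈ S, D b = 0) {b : B}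
    (hb : b ∈ Ideal.span S) : D b = 0 := by
  induction hb using Submodule.span_induction with
  | mem b hb => exact hD b hb
  | zero => exact map_zero D
  | add a b _ _ ha hb => rw [map_add, ha, hb, add_zero]
  | smul a b hb hDb =>
    have h_annihilates : Ideal.span S ≤ Module.annihilator B M :=
      Ideal.span_le.2 fun b hb => Module.mem_annihilator.2 (hM b hb)
    rw [smul_eq_mul, D.leibniz, hDb, smul_zero, zero_add,
      Module.mem_annihilator.1 (h_annihilates hb)]

theorem smul_eq_zero_of_mem_of_quotient_module {B M : Type*} [CommRing B] {I : Ideal B}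
    [AddCommGroup M] [Module B M] [Module (B ⧸ I) M] [IsScalarTower B (B ⧸ I) M] {b : B}
    (hb : b ∈ I) (z : M) : b • z = 0 := by
  rw [← algebraMap_smul (B ⧸ I) b z, Ideal.Quotient.algebraMap_eq,
    Ideal.Quotient.eq_zero_iff_mem.2 hb, zero_smul]

section DerivationsOfQuotient

variable {σ R : Type*} [CommRing R] (S : Set (MvPolynomial σ R)) (M : Type*) [AddCommGroup M]
  [Module R M] [Module (MvPolynomial σ R) M] [IsScalarTower R (MvPolynomial σ R) M]
  [Module (MvPolynomial σ R ⧸ Ideal.span S) M]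
  [IsScalarTower R (MvPolynomial σ R ⧸ Ideal.span S) M]
  [IsScalarTower (MvPolynomial σ R) (MvPolynomial σ R ⧸ Ideal.span S) M]

/-- The values of a derivation of `R[X_σ] ⧸ (S)` on the classes of the variables. -/
noncomputable def derivationValues :
    Derivation R (MvPolynomial σ R ⧸ Ideal.span S) M →ₗ[R] (σ → M) where
  toFun D i := D (Ideal.Quotient.mk _ (X i))
  map_add' _ _ := rfl
  map_smul' _ _ := rfl

variable {S M}

theorem mkDerivation_derivationValues (D : Derivation R (MvPolynomial σ R ⧸ Ideal.span S) M)
    (p : MvPolynomial σ R) :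
    mkDerivation R (derivationValues S M D) p = D (Ideal.Quotient.mk _ p) := by
  have h : mkDerivation R (derivationValues S M D) = D.compAlgebraMap (MvPolynomial σ R) :=
    derivation_ext fun i => mkDerivation_X R _ i
  exact congrArg (· p) h

variable (S M) in
theorem derivationValues_injective : Function.Injective (derivationValues S M) := by
  intro D E h
  ext z
  obtain ⟨p, rfl⟩ := Ideal.Quotient.mk_surjective z
  rw [← mkDerivation_derivationValues, h, mkDerivation_derivationValues]

theorem mem_range_derivationValues_iff {v : σ → M} :
    v ∈ LinearMap.range (derivationValues S M) ↔ ∀ p ∈ S, mkDerivation R v p = 0 := by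
  constructor
  · rintro ⟨D, rfl⟩ p hp
    rw [mkDerivation_derivationValues,
      Ideal.Quotient.eq_zero_iff_mem.2 (Ideal.subset_span hp), map_zero]
  · intro hv
    let D : (MvPolynomial σ R ⧸ Ideal.span S) →ₗ[R] M :=
      Submodule.liftQ ((Ideal.span S).restrictScalars R) (mkDerivation R v).toLinearMap
        fun _ hp => derivation_eq_zero_of_mem_span
          (fun _ hp => smul_eq_zero_of_mem_of_quotient_module (Ideal.subset_span hp)) hv hp
    have hD (p : MvPolynomial σ R) : D (Ideal.Quotient.mk _ p) = mkDerivation R v p := rfl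
    refine ⟨Derivation.mk' D fun a b => ?_, ?_⟩
    · obtain ⟨p, rfl⟩ := Ideal.Quotient.mk_surjective a
      obtain ⟨q, rfl⟩ := Ideal.Quotient.mk_surjective b
      rw [← map_mul, hD, hD, hD, Derivation.leibniz, ← Ideal.Quotient.algebraMap_eq,
        algebraMap_smul, algebraMap_smul]
    · ext i
      exact (hD (X i)).trans (mkDerivation_X R v i)

end DerivationsOfQuotient

section TangentEquations

variable {R M : Type*} [CommRing R] [AddCommGroup M] [Module R M]
  [Module (MvPolynomial (Fin 2) R) M] [IsScalarTower R (MvPolynomial (Fin 2) R) M]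

theorem mkDerivation_two_mul_X_mul_X (v : Fin 2 → M) :
    mkDerivation R v (2 * X 0 * X 1) =
      (2 : R) • ((X 1 : MvPolynomial (Fin 2) R) • v 0 + (X 0 : MvPolynomial (Fin 2) R) • v 1) := by
  have h : (2 * X 0 * X 1 : MvPolynomial (Fin 2) R) = (2 : R) • (X 0 * X 1) := by
    rw [smul_eq_C_mul, map_ofNat, mul_assoc]
  rw [h, Derivation.map_smul, Derivation.leibniz, mkDerivation_X, mkDerivation_X, add_comm]

theorem mkDerivation_X_sq_add_C_mul_X_pow (c : R) (n : ℕ) (v : Fin 2 → M) :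
    mkDerivation R v (X 0 ^ 2 + C c * X 1 ^ n) =
      (2 : R) • (X 0 : MvPolynomial (Fin 2) R) • v 0 +
        (c * n) • (X 1 ^ (n - 1) : MvPolynomial (Fin 2) R) • v 1 := by
  rw [map_add, ← smul_eq_C_mul, Derivation.map_smul, Derivation.leibniz_pow,
    Derivation.leibniz_pow, mkDerivation_X, mkDerivation_X, mul_smul, Nat.cast_smul_eq_nsmul,
    pow_one, ← Nat.cast_smul_eq_nsmul R 2, Nat.cast_ofNat]

end TangentEquations

theorem exists_mem_degreeLT_X_pow_dvd_sub {R : Type*} [CommRing R] [Nontrivial R] (n : ℕ)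
    (f : R[X]) : ∃ r ∈ Polynomial.degreeLT R n, Polynomial.X ^ n ∣ f - r := by
  have hmonic := Polynomial.monic_X_pow (R := R) n
  refine ⟨f %ₘ .X ^ n, ?_, f /ₘ .X ^ n, ?_⟩
  · rw [Polynomial.mem_degreeLT, ← Polynomial.degree_X_pow (R := R) n]
    exact Polynomial.degree_modByMonic_lt f hmonic
  · linear_combination -Polynomial.modByMonic_add_div f (.X ^ n)

theorem eq_zero_of_mem_degreeLT_of_X_pow_dvd {R : Type*} [Semiring R] {n : ℕ} {f : R[X]}
    (hf : f ∈ Polynomial.degreeLT R n) (hdvd : Polynomial.X ^ n ∣ f) : f = 0 := by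
  ext i
  rcases lt_or_ge i n with hi | hi
  · exact Polynomial.X_pow_dvd_iff.1 hdvd i hi
  · exact Polynomial.coeff_eq_zero_of_degree_lt
      ((Polynomial.mem_degreeLT.1 hf).trans_le (by exact_mod_cast hi))

theorem X_pow_add_dvd_X_pow_mul_iff {R : Type*} [CommRing R] {k n : ℕ} {f : R[X]} :
    Polynomial.X ^ (k + n) ∣ Polynomial.X ^ k * f ↔ Polynomial.X ^ n ∣ f := by
  rw [pow_add]
  exact (Polynomial.monic_X_pow k).isRegular.left.dvd_cancel_left

section NormalForm

variable {R A : Type*} [CommRing R] [CommRing A] [Algebra R A]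

theorem mul_aeval_of_mul_eq_zero {z y : A} (h : z * y = 0) (f : R[X]) :
    z * Polynomial.aeval y f = f.coeff 0 • z := by
  conv_lhs => rw [← f.X_mul_divX_add]
  rw [map_add, map_mul, Polynomial.aeval_X, Polynomial.aeval_C, mul_add, ← mul_assoc, h, zero_mul,
    zero_add, mul_comm, Algebra.smul_def]

theorem mul_aeval_add_smul {x y : A} {c : R} {n : ℕ} (hxy : x * y = 0)
    (hx : x ^ 2 = -(c • y ^ n)) (f : R[X]) (s : R) :
    x * (Polynomial.aeval y f + s • x) = f.coeff 0 • x - (c * s) • y ^ n := by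
  rw [mul_add, mul_aeval_of_mul_eq_zero hxy, mul_smul_comm, ← sq, hx, smul_neg, smul_smul,
    mul_comm s, sub_eq_add_neg]

theorem pow_succ_eq_zero_of_sq_eq_neg_smul_pow {x y : A} {c : R} {n : ℕ} (hc : IsUnit c)
    (hxy : x * y = 0) (hx : x ^ 2 = -(c • y ^ n)) : y ^ (n + 1) = 0 := by
  have h : c • y ^ n = -x ^ 2 := by rw [hx, neg_neg]
  rw [← hc.smul_eq_zero, pow_succ, ← smul_mul_assoc, h, neg_mul, sq, mul_assoc, hxy, mul_zero,
    neg_zero]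

theorem exists_aeval_eq_aeval_add_smul {x y : A} {c : R} {n : ℕ} (hxy : x * y = 0)
    (hx : x ^ 2 = -(c • y ^ n)) (p : MvPolynomial (Fin 2) R) :
    ∃ (f : R[X]) (s : R), aeval ![x, y] p = Polynomial.aeval y f + s • x := by
  induction p using MvPolynomial.induction_on with
  | C r => exact ⟨.C r, 0, by simp⟩
  | add p q hp hq =>
    obtain ⟨f, s, hp⟩ := hp
    obtain ⟨g, t, hq⟩ := hq
    exact ⟨f + g, s + t, by rw [map_add, hp, hq, map_add, add_smul]; abel⟩
  | mul_X p i hp =>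
    obtain ⟨f, s, hp⟩ := hp
    rw [map_mul, hp, aeval_X, mul_comm]
    obtain rfl | rfl : i = 0 ∨ i = 1 := by omega
    · refine ⟨-.C (c * s) * .X ^ n, f.coeff 0, (mul_aeval_add_smul hxy hx f s).trans ?_⟩
      simp only [map_mul, map_neg, Polynomial.aeval_C, Polynomial.aeval_X_pow, Algebra.smul_def]
      ring
    · refine ⟨.X * f, 0, ?_⟩
      simp [mul_add, mul_comm y x, hxy]

/-- The relations `xy = 0`, `x² = -cyⁿ` hold and `1, y, …, yⁿ, x` is a basis of the algebra. The
powers of `y` are packaged as the algebra `R[y]`, a quotient of the polynomial ring by `yⁿ⁺¹`. -/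
structure HasNormalFormD (x y : A) (c : R) (n : ℕ) : Prop where
  mul_eq_zero : x * y = 0
  sq_eq : x ^ 2 = -(c • y ^ n)
  exists_eq (z : A) : ∃ (f : R[X]) (s : R), z = Polynomial.aeval y f + s • x
  aeval_add_smul_eq_zero_iff (f : R[X]) (s : R) :
    Polynomial.aeval y f + s • x = 0 ↔ Polynomial.X ^ (n + 1) ∣ f ∧ s = 0

/-- Parametrization by `(h, t, α)` of the pairs `(a, b)` with `ya + xb = 0` and
`2xa + cn yⁿ⁻¹b = 0`, in the normal form of `HasNormalFormD`. -/
noncomputable def tangentParametrization [Invertible (2 : R)] (x y : A) (c : R) (n : ℕ) :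
    Polynomial.degreeLT R n × R × R →ₗ[R] (Fin 2 → A) where
  toFun u :=
    ![Polynomial.aeval y ((c * u.2.1) • Polynomial.X ^ (n - 1) + u.2.2 • Polynomial.X ^ n : R[X]) +
        (⅟2 * n * u.1.1.coeff 0) • x,
      Polynomial.aeval y (Polynomial.X * u.1.1) + u.2.1 • x]
  map_add' u v := by
    refine funext <| Fin.forall_fin_two.2 ⟨?_, ?_⟩
    · simp only [Prod.fst_add, Prod.snd_add, Pi.add_apply, Matrix.cons_val_zero, Submodule.coe_add,
        Polynomial.coeff_add, map_add, map_smul]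
      module
    · simp only [Prod.fst_add, Prod.snd_add, Pi.add_apply, Matrix.cons_val_one,
        Matrix.cons_val_fin_one, Submodule.coe_add, mul_add, map_add]
      module
  map_smul' r u := by
    refine funext <| Fin.forall_fin_two.2 ⟨?_, ?_⟩
    · simp only [Prod.smul_fst, Prod.smul_snd, Pi.smul_apply, Matrix.cons_val_zero,
        Submodule.coe_smul, Polynomial.coeff_smul, map_add, map_smul, smul_eq_mul, RingHom.id_apply]
      module
    · simp only [Prod.smul_fst, Prod.smul_snd, Pi.smul_apply, Matrix.cons_val_one,
        Matrix.cons_val_fin_one, Submodule.coe_smul, mul_smul_comm, map_smul, smul_eq_mul,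
        RingHom.id_apply]
      module

theorem tangentParametrization_apply_zero [Invertible (2 : R)] (x y : A) (c : R) (n : ℕ)
    (u : Polynomial.degreeLT R n × R × R) :
    tangentParametrization x y c n u 0 =
      Polynomial.aeval y ((c * u.2.1) • Polynomial.X ^ (n - 1) + u.2.2 • Polynomial.X ^ n : R[X]) +
        (⅟2 * n * u.1.1.coeff 0) • x :=
  rfl

theorem tangentParametrization_apply_one [Invertible (2 : R)] (x y : A) (c : R) (n : ℕ)
    (u : Polynomial.degreeLT R n × R × R) :
    tangentParametrization x y c n u 1 =
      Polynomial.aeval y (Polynomial.X * u.1.1) + u.2.1 • x :=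
  rfl

namespace HasNormalFormD

variable {x y : A} {c : R} {n : ℕ} (H : HasNormalFormD x y c n)
include H

theorem pow_succ_eq_zero : y ^ (n + 1) = 0 := by
  simpa using (H.aeval_add_smul_eq_zero_iff (Polynomial.X ^ (n + 1)) 0).2 ⟨dvd_rfl, rfl⟩

theorem mul_pow_eq_zero {k : ℕ} (hk : k ≠ 0) : x * y ^ k = 0 := by
  rw [← mul_pow_sub_one hk, ← mul_assoc, H.mul_eq_zero, zero_mul]

theorem pow_mul_aeval (f : R[X]) : y ^ n * Polynomial.aeval y f = f.coeff 0 • y ^ n :=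
  mul_aeval_of_mul_eq_zero (by rw [← pow_succ, H.pow_succ_eq_zero]) f

theorem aeval_eq_zero_of_X_pow_dvd {f : R[X]} (hf : Polynomial.X ^ (n + 1) ∣ f) :
    Polynomial.aeval y f = 0 := by
  simpa using (H.aeval_add_smul_eq_zero_iff f 0).2 ⟨hf, rfl⟩

theorem first_tangent_equation_iff (hn : n ≠ 0) (f g : R[X]) (s t : R) :
    y * (Polynomial.aeval y f + s • x) + x * (Polynomial.aeval y g + t • x) = 0 ↔
      Polynomial.X ^ n ∣ f - (c * t) • Polynomial.X ^ (n - 1) ∧ g.coeff 0 = 0 := by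
  have h_normal : y * (Polynomial.aeval y f + s • x) + x * (Polynomial.aeval y g + t • x) =
      Polynomial.aeval y (Polynomial.X * (f - (c * t) • Polynomial.X ^ (n - 1))) +
        g.coeff 0 • x := by
    rw [mul_aeval_add_smul H.mul_eq_zero H.sq_eq, mul_sub, mul_smul_comm,
      mul_pow_sub_one hn, mul_add, mul_smul_comm, mul_comm y x, H.mul_eq_zero, smul_zero, map_sub,
      map_mul, map_smul, Polynomial.aeval_X, Polynomial.aeval_X_pow]
    ring
  rw [h_normal, H.aeval_add_smul_eq_zero_iff, pow_succ',
    Polynomial.monic_X.isRegular.left.dvd_cancel_left]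

theorem second_tangent_equation_iff (hn : 2 ≤ n) (f h : R[X]) (s t : R) :
    (2 : R) • (x * (Polynomial.aeval y f + s • x)) +
        (c * n) • (y ^ (n - 1) * (Polynomial.aeval y (Polynomial.X * h) + t • x)) = 0 ↔
      c * n * h.coeff 0 = 2 * (c * s) ∧ 2 * f.coeff 0 = 0 := by
  have hyx : y ^ (n - 1) * x = 0 := by rw [mul_comm, H.mul_pow_eq_zero (by omega)]
  have h_normal : (2 : R) • (x * (Polynomial.aeval y f + s • x)) +
        (c * n) • (y ^ (n - 1) * (Polynomial.aeval y (Polynomial.X * h) + t • x)) =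
      Polynomial.aeval y (Polynomial.X ^ n *
        Polynomial.C (c * n * h.coeff 0 - 2 * (c * s))) + (2 * f.coeff 0) • x := by
    rw [mul_aeval_add_smul H.mul_eq_zero H.sq_eq, mul_add (y ^ _), mul_smul_comm, hyx, smul_zero,
      add_zero, map_mul (Polynomial.aeval y) Polynomial.X, Polynomial.aeval_X, ← mul_assoc,
      pow_sub_one_mul (by omega), H.pow_mul_aeval, map_mul, Polynomial.aeval_X_pow,
      Polynomial.aeval_C, mul_comm (y ^ n), ← Algebra.smul_def]
    module
  rw [h_normal, H.aeval_add_smul_eq_zero_iff, X_pow_add_dvd_X_pow_mul_iff, pow_one,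
    Polynomial.X_dvd_iff, Polynomial.coeff_C_zero, sub_eq_zero]

theorem tangentParametrization_injective [Invertible (2 : R)] :
    Function.Injective (tangentParametrization x y c n) := by
  refine (injective_iff_map_eq_zero _).2 fun ⟨⟨h, hh⟩, t, α⟩ hu => ?_
  have ha := congrFun hu 0
  have hb := congrFun hu 1
  rw [tangentParametrization_apply_zero, Pi.zero_apply, H.aeval_add_smul_eq_zero_iff] at ha
  rw [tangentParametrization_apply_one, Pi.zero_apply, H.aeval_add_smul_eq_zero_iff] at hb
  obtain ⟨hX, rfl⟩ := hb
  rw [pow_succ', Polynomial.monic_X.isRegular.left.dvd_cancel_left] at hX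
  obtain rfl := eq_zero_of_mem_degreeLT_of_X_pow_dvd hh hX
  obtain rfl : α = 0 := by simpa using Polynomial.X_pow_dvd_iff.1 ha.1 n n.lt_succ_self
  rfl

theorem tangent_equations_of_mem_range [Invertible (2 : R)] (hn : 2 ≤ n) {v : Fin 2 → A}
    (hv : v ∈ LinearMap.range (tangentParametrization x y c n)) :
    y * v 0 + x * v 1 = 0 ∧ (2 : R) • (x * v 0) + (c * n) • (y ^ (n - 1) * v 1) = 0 := by
  obtain ⟨⟨⟨h, hh⟩, t, α⟩, rfl⟩ := hv
  rw [tangentParametrization_apply_zero, tangentParametrization_apply_one,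
    H.first_tangent_equation_iff (by omega), H.second_tangent_equation_iff hn]
  refine ⟨⟨?_, Polynomial.coeff_X_mul_zero h⟩, ?_, ?_⟩
  · rw [add_sub_cancel_left, Polynomial.smul_eq_C_mul]
    exact dvd_mul_left _ _
  · linear_combination -(c * n * h.coeff 0) * mul_invOf_self (2 : R)
  · simp [Polynomial.coeff_X_pow, show 0 ≠ n - 1 by omega, show 0 ≠ n by omega]

theorem mem_range_tangentParametrization [Invertible (2 : R)] [Nontrivial R] (hc : IsUnit c)
    (hn : 2 ≤ n) {v : Fin 2 → A} (hv₁ : y * v 0 + x * v 1 = 0)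
    (hv₂ : (2 : R) • (x * v 0) + (c * n) • (y ^ (n - 1) * v 1) = 0) :
    v ∈ LinearMap.range (tangentParametrization x y c n) := by
  obtain ⟨f, s, ha⟩ := H.exists_eq (v 0)
  obtain ⟨g, t, hb⟩ := H.exists_eq (v 1)
  rw [ha, hb] at hv₁ hv₂
  obtain ⟨⟨q, hq⟩, hg⟩ := (H.first_tangent_equation_iff (by omega) f g s t).1 hv₁
  obtain ⟨h, rfl⟩ := Polynomial.X_dvd_iff.2 hg
  have hs : n * h.coeff 0 = 2 * s := hc.mul_left_cancel <| by
    linear_combination ((H.second_tangent_equation_iff hn f h s t).1 hv₂).1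
  obtain ⟨r, hr, hdvd⟩ := exists_mem_degreeLT_X_pow_dvd_sub n h
  have h_coeff : h.coeff 0 = r.coeff 0 :=
    sub_eq_zero.1 (by simpa using Polynomial.X_pow_dvd_iff.1 hdvd 0 (by omega))
  have hs_eq : ⅟2 * n * r.coeff 0 = s := by
    rw [← h_coeff, mul_assoc, hs, invOf_mul_cancel_left]
  have hf : Polynomial.aeval y f =
      Polynomial.aeval y
        ((c * t) • Polynomial.X ^ (n - 1) + q.coeff 0 • Polynomial.X ^ n : R[X]) := by
    rw [sub_eq_iff_eq_add'.1 hq, map_add, map_add, map_mul, Polynomial.aeval_X_pow, H.pow_mul_aeval,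
      map_smul _ (q.coeff 0), Polynomial.aeval_X_pow]
  have hh : Polynomial.aeval y (Polynomial.X * h) = Polynomial.aeval y (Polynomial.X * r) := by
    rw [← sub_eq_zero, ← map_sub, ← mul_sub]
    refine H.aeval_eq_zero_of_X_pow_dvd ?_
    rw [pow_succ']
    exact mul_dvd_mul_left _ hdvd
  refine ⟨(⟨r, hr⟩, t, q.coeff 0), funext <| Fin.forall_fin_two.2 ⟨?_, ?_⟩⟩
  · rw [tangentParametrization_apply_zero, ha, hf, hs_eq]
  · rw [tangentParametrization_apply_one, hb, hh]

end HasNormalFormD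

end NormalForm

theorem finrank_degreeLT_prod (R : Type*) [CommRing R] [Nontrivial R] (n : ℕ) :
    Module.finrank R (Polynomial.degreeLT R n × R × R) = n + 2 := by
  have e := (Polynomial.degreeLTEquiv R n).prodCongr (LinearEquiv.refl R (R × R))
  rw [e.finrank_eq, Module.finrank_prod, Module.finrank_prod, Module.finrank_fin_fun,
    Module.finrank_self]

theorem coeff_zero_aeval {R σ : Type*} [CommSemiring R] {g : σ → R[X]}
    (hg : ∀ i, (g i).coeff 0 = 0) (p : MvPolynomial σ R) :
    (aeval g p).coeff 0 = constantCoeff p := by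
  have h : Polynomial.constantCoeff.comp (aeval g : MvPolynomial σ R →ₐ[R] R[X]) =
      (constantCoeff : MvPolynomial σ R →+* R) := by
    ext i
    · simp
    · simpa using hg i
  exact congrArg (· p) h

theorem aeval_aeval_X_one_add_smul_X_zero {R B : Type*} [CommSemiring R] [CommSemiring B]
    [Algebra R B] (g : Fin 2 → B) (f : R[X]) (s : R) :
    aeval g (Polynomial.aeval (X 1) f + s • X 0 : MvPolynomial (Fin 2) R) =
      Polynomial.aeval (g 1) f + s • g 0 := by
  rw [map_add, map_smul, ← Polynomial.aeval_algHom_apply, aeval_X, aeval_X]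

/-- The defining relations `2XY` and `X² + cYⁿ`. The partial derivatives of `X²Y + Y^{m-1}` are the
case `c = m - 1`, `n = m - 2`. -/
abbrev relationsD {R : Type*} [CommRing R] (c : R) (n : ℕ) : Set (MvPolynomial (Fin 2) R) :=
  {2 * X 0 * X 1, X 0 ^ 2 + C c * X 1 ^ n}

/-- The algebra `R[X, Y] ⧸ (2XY, X² + cYⁿ)`, of which the moduli algebra of `D_m` is the case
`R = ℂ`, `c = m - 1`, `n = m - 2`. -/
abbrev ModuliAlgebraD (R : Type*) [CommRing R] (c : R) (n : ℕ) : Type _ :=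
  MvPolynomial (Fin 2) R ⧸ Ideal.span (relationsD c n)

namespace ModuliAlgebraD

variable {R : Type*} [CommRing R]

section Generators

variable (c : R) (n : ℕ)

/-- The class of `X` in the moduli algebra. -/
noncomputable def x : ModuliAlgebraD R c n := Ideal.Quotient.mkₐ R _ (X 0)

/-- The class of `Y` in the moduli algebra. -/
noncomputable def y : ModuliAlgebraD R c n := Ideal.Quotient.mkₐ R _ (X 1)

theorem x_sq : x c n ^ 2 = -(c • y c n ^ n) := by
  rw [eq_neg_iff_add_eq_zero, x, y, ← map_pow, ← map_pow, ← map_smul, ← map_add, smul_eq_C_mul]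
  exact Ideal.Quotient.eq_zero_iff_mem.2 (Ideal.subset_span (by simp))

theorem x_mul_y [Invertible (2 : R)] : x c n * y c n = 0 := by
  have h : (2 : R) • (x c n * y c n) = 0 := by
    rw [x, y, ← map_mul, ← map_smul, smul_eq_C_mul, map_ofNat, ← mul_assoc]
    exact Ideal.Quotient.eq_zero_iff_mem.2 (Ideal.subset_span (by simp))
  rw [← invOf_smul_smul (2 : R) (x c n * y c n), h, smul_zero]

end Generators

-- The generator `2XY` vanishes on both axes `X = 0` and `Y = 0`, so restricting to them
-- eliminates its coefficient.
theorem X_pow_dvd_of_mem_span {c : R} {n : ℕ} (hn : n ≠ 0) {f : R[X]} {s : R}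
    (h : Polynomial.aeval (X 1) f + s • X 0 ∈ Ideal.span (relationsD c n)) :
    Polynomial.X ^ (n + 1) ∣ f ∧ s = 0 := by
  obtain ⟨u, v, h⟩ := Ideal.mem_span_pair.1 h
  set vX : R[X] := aeval ![Polynomial.X, 0] v with hvX
  set vY : R[X] := aeval ![0, Polynomial.X] v with hvY
  have hX : Polynomial.X ^ 2 * vX = Polynomial.C (f.coeff 0) + s • Polynomial.X := calc
    Polynomial.X ^ 2 * vX = aeval ![Polynomial.X, 0] (u * (2 * X 0 * X 1) +
        v * (X 0 ^ 2 + C c * X 1 ^ n)) := by simp [hvX, zero_pow hn, mul_comm]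
    _ = Polynomial.aeval 0 f + s • Polynomial.X := by
      rw [h, aeval_aeval_X_one_add_smul_X_zero]
      rfl
    _ = Polynomial.C (f.coeff 0) + s • Polynomial.X := by
      rw [← Polynomial.coeff_zero_eq_aeval_zero']
      rfl
  have hY : Polynomial.X ^ n * (Polynomial.C c * vY) = f := calc
    Polynomial.X ^ n * (Polynomial.C c * vY) = aeval ![0, Polynomial.X] (u * (2 * X 0 * X 1) +
        v * (X 0 ^ 2 + C c * X 1 ^ n)) := by
      simp only [hvY, map_add, map_mul, map_pow, aeval_X, algHom_C, Matrix.cons_val_zero,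
        Matrix.cons_val_one, Matrix.cons_val_fin_one, Polynomial.algebraMap_eq]
      ring
    _ = Polynomial.aeval Polynomial.X f + s • 0 := by
      rw [h, aeval_aeval_X_one_add_smul_X_zero]
      rfl
    _ = f := by rw [Polynomial.aeval_X_left_apply, smul_zero, add_zero]
  have h_origin : vX.coeff 0 = vY.coeff 0 :=
    (coeff_zero_aeval (by simp [Fin.forall_fin_two]) v).trans
      (coeff_zero_aeval (by simp [Fin.forall_fin_two]) v).symm
  have h_coeff (i : ℕ) := congrArg (Polynomial.coeff · i) hX
  have hs : s = 0 := by simpa [Polynomial.coeff_X_pow_mul', Polynomial.coeff_C] using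
    (h_coeff 1).symm
  have hvX_coeff : vX.coeff 0 = 0 := by
    simpa [Polynomial.coeff_X_pow_mul', Polynomial.coeff_C, Polynomial.coeff_X] using h_coeff 2
  refine ⟨?_, hs⟩
  rw [← hY, X_pow_add_dvd_X_pow_mul_iff, pow_one]
  exact (Polynomial.X_dvd_iff.2 (h_origin.symm.trans hvX_coeff)).mul_left _

theorem mkₐ_eq_aeval (c : R) (n : ℕ) (p : MvPolynomial (Fin 2) R) :
    (Ideal.Quotient.mkₐ R _ p : ModuliAlgebraD R c n) = aeval ![x c n, y c n] p := by
  have h : Ideal.Quotient.mkₐ R _ = aeval ![x c n, y c n] :=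
    algHom_ext <| Fin.forall_fin_two.2 ⟨by rw [aeval_X]; rfl, by rw [aeval_X]; rfl⟩
  rw [h]

theorem hasNormalFormD [Invertible (2 : R)] {c : R} (hc : IsUnit c) {n : ℕ} (hn : n ≠ 0) :
    HasNormalFormD (x c n) (y c n) c n where
  mul_eq_zero := x_mul_y c n
  sq_eq := x_sq c n
  exists_eq z := by
    obtain ⟨p, rfl⟩ := Ideal.Quotient.mkₐ_surjective R _ z
    rw [mkₐ_eq_aeval]
    exact exists_aeval_eq_aeval_add_smul (x_mul_y c n) (x_sq c n) p
  aeval_add_smul_eq_zero_iff f s := by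
    have h_lift : Polynomial.aeval (y c n) f + s • x c n =
        Ideal.Quotient.mkₐ R _ (Polynomial.aeval (X 1) f + s • X 0) := by
      rw [map_add, map_smul, ← Polynomial.aeval_algHom_apply]
      rfl
    refine ⟨fun h => X_pow_dvd_of_mem_span hn <|
      Ideal.Quotient.eq_zero_iff_mem.1 (h_lift.symm.trans h), ?_⟩
    rintro ⟨⟨g, rfl⟩, rfl⟩
    rw [map_mul, Polynomial.aeval_X_pow,
      pow_succ_eq_zero_of_sq_eq_neg_smul_pow hc (x_mul_y c n) (x_sq c n), zero_mul,
      zero_smul, add_zero]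

theorem mem_range_derivationValues_iff_tangent_equations [Invertible (2 : R)] {c : R} {n : ℕ}
    {v : Fin 2 → ModuliAlgebraD R c n} :
    v ∈ LinearMap.range (derivationValues (relationsD c n) (ModuliAlgebraD R c n)) ↔
      y c n * v 0 + x c n * v 1 = 0 ∧
        (2 : R) • (x c n * v 0) + (c * n) • (y c n ^ (n - 1) * v 1) = 0 := by
  rw [mem_range_derivationValues_iff]
  simp only [Set.mem_insert_iff, Set.mem_singleton_iff, forall_eq_or_imp, forall_eq]
  rw [mkDerivation_two_mul_X_mul_X, mkDerivation_X_sq_add_C_mul_X_pow,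
    (isUnit_of_invertible (2 : R)).smul_eq_zero]
  rfl

theorem range_derivationValues [Nontrivial R] [Invertible (2 : R)] {c : R} (hc : IsUnit c) {n : ℕ}
    (hn : 2 ≤ n) :
    LinearMap.range (derivationValues (relationsD c n) (ModuliAlgebraD R c n)) =
      LinearMap.range (tangentParametrization (x c n) (y c n) c n) := by
  have H := hasNormalFormD hc (n := n) (by omega)
  ext v
  rw [mem_range_derivationValues_iff_tangent_equations]
  exact ⟨fun hv => H.mem_range_tangentParametrization hc hn hv.1 hv.2,
    H.tangent_equations_of_mem_range hn⟩

end ModuliAlgebraD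

theorem finrank_derivations_Dm_general {R : Type*} [CommRing R] [Nontrivial R] [Invertible (2 : R)]
    {c : R} (hc : IsUnit c) {n : ℕ} (hn : 2 ≤ n) :
    Module.finrank R (Derivation R (ModuliAlgebraD R c n) (ModuliAlgebraD R c n)) = n + 2 := by
  have H := ModuliAlgebraD.hasNormalFormD hc (n := n) (by omega)
  rw [← LinearMap.finrank_range_of_inj (derivationValues_injective (relationsD c n) _),
    ModuliAlgebraD.range_derivationValues hc hn,
    LinearMap.finrank_range_of_inj H.tangentParametrization_injective,
    finrank_degreeLT_prod]

/-- The space of `ℂ`-linear derivations of the moduli algebra of the simple singularity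
`D_m` has dimension `m`. -/
theorem finrank_derivations_Dm (m : ℕ) (hm : 4 ≤ m) :
    Module.finrank ℂ (Derivation ℂ (moduliD m) (moduliD m)) = m := by
  have hc : (m : ℂ) - 1 ≠ 0 := sub_ne_zero.2 (by exact_mod_cast (by omega : m ≠ 1))
  exact (finrank_derivations_Dm_general hc.isUnit (by omega)).trans (by omega)
end

section
/- Let A = ℂ[X, Y]/(3X² + Y³, 3XY²) be the quotient of the polynomial ring in two variables by the ideal generated by the two partial derivatives of f(x, y) = x³ + xy³. Then the ℂ-vector space Der_ℂ(A, A) of ℂ-linear derivations of A has dimension 8. -/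
open MvPolynomial

/-- The moduli algebra of the simple singularity `E₇`, `f(x,y) = x³ + xy³`:
the quotient of `ℂ[X,Y]` by the ideal generated by `∂f/∂x = 3x² + y³` and
`∂f/∂y = 3xy²`. -/
noncomputable abbrev moduliE7 : Type :=
  MvPolynomial (Fin 2) ℂ ⧸
    Ideal.span {(3 : MvPolynomial (Fin 2) ℂ) * MvPolynomial.X 0 ^ 2 + MvPolynomial.X 1 ^ 3,
      (3 : MvPolynomial (Fin 2) ℂ) * MvPolynomial.X 0 * MvPolynomial.X 1 ^ 2}

/-!
A derivation of `R[x, y] / (f_x, f_y)` is a vector field `v ∂x + w ∂y` with coefficients in the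
quotient that kills `f_x = 3x² + y³` and `f_y = 3xy²`. If `3` is invertible, then `xy² = 0`,
`x³ = 0` and `y³ = -3x²` in the quotient, which is therefore free with basis
`1, x, y, xy, y², x², x²y`. In coordinates, the two equations for `v` and `w` have as solutions the
combinations of eight fields, one of which is the Euler field `3x ∂x + 2y ∂y`.
-/

section DerivationQuotient

variable {R S M : Type*} [CommRing R] [CommRing S] [Algebra R S] [AddCommGroup M] [Module R M]
  [Module S M]

/-- The submodule of the derivations `S → M` that vanish on the set `s`. -/
def derivationsVanishingOn [IsScalarTower R S M] (s : Set S) : Submodule R (Derivation R S M) where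
  carrier := {D | ∀ f ∈ s, D f = 0}
  zero_mem' _ _ := rfl
  add_mem' hD hE f hf := by rw [Derivation.add_apply, hD f hf, hE f hf, add_zero]
  smul_mem' c D hD f hf := by rw [Derivation.smul_apply, hD f hf, smul_zero]

variable (s : Set S) [Module (S ⧸ Ideal.span s) M] [IsScalarTower S (S ⧸ Ideal.span s) M]

theorem quotientMk_smul (f : S) (m : M) : Ideal.Quotient.mk (Ideal.span s) f • m = f • m :=
  algebraMap_smul (S ⧸ Ideal.span s) f m

variable {s} in
theorem derivation_eq_zero_of_mem_span_s17 {D : Derivation R S M} (hD : ∀ f ∈ s, D f = 0) {f : S}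
    (hf : f ∈ Ideal.span s) : D f = 0 := by
  induction hf using Submodule.span_induction with
  | mem f hf => exact hD f hf
  | zero => exact map_zero D
  | add f g _ _ hf hg => rw [map_add, hf, hg, add_zero]
  | smul a f hf ih =>
    have f_smul : f • D a = 0 := by
      rw [← quotientMk_smul s, Ideal.Quotient.eq_zero_iff_mem.2 hf, zero_smul]
    rw [smul_eq_mul, D.leibniz, ih, f_smul, smul_zero, zero_add]

variable {s} in
/-- The derivation of the quotient by the ideal generated by `s` which is induced by a derivation
that vanishes on `s`. -/
def derivationQuotientLift (D : Derivation R S M) (hD : ∀ f ∈ s, D f = 0) :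
    Derivation R (S ⧸ Ideal.span s) M :=
  Derivation.mk' (((Ideal.span s).restrictScalars R).liftQ D.toLinearMap
    fun _ ↦ derivation_eq_zero_of_mem_span_s17 hD) fun a b ↦ by
    obtain ⟨f, rfl⟩ := Ideal.Quotient.mk_surjective a
    obtain ⟨g, rfl⟩ := Ideal.Quotient.mk_surjective b
    rw [quotientMk_smul, quotientMk_smul]
    exact D.leibniz f g

variable [IsScalarTower R S M] [IsScalarTower R (S ⧸ Ideal.span s) M]

/-- Derivations of the quotient by the ideal generated by `s` are the derivations of the ring that
vanish on `s`. -/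
def derivationQuotientEquiv :
    Derivation R (S ⧸ Ideal.span s) M ≃ₗ[R] derivationsVanishingOn (R := R) (M := M) s where
  toFun D := ⟨D.compAlgebraMap S, fun f hf ↦ by
    rw [Derivation.compAlgebraMap_apply, Ideal.Quotient.algebraMap_eq,
      Ideal.Quotient.eq_zero_iff_mem.2 (Ideal.subset_span hf), map_zero]⟩
  map_add' _ _ := rfl
  map_smul' _ _ := rfl
  invFun D := derivationQuotientLift D.1 D.2
  left_inv D := Derivation.ext <| Ideal.Quotient.mk_surjective.forall.2 fun _ ↦ rfl
  right_inv D := rfl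

end DerivationQuotient

/-- The partial derivatives `∂f/∂x` and `∂f/∂y` of `f = x³ + xy³`. -/
abbrev jacobianE7 (R : Type*) [CommRing R] : Set (MvPolynomial (Fin 2) R) :=
  {3 * X 0 ^ 2 + X 1 ^ 3, 3 * X 0 * X 1 ^ 2}

/-- The moduli algebra of `E₇` over an arbitrary coefficient ring. -/
abbrev ModuliAlgebraE7 (R : Type*) [CommRing R] : Type _ :=
  MvPolynomial (Fin 2) R ⧸ Ideal.span (jacobianE7 R)

namespace ModuliAlgebraE7

variable {R : Type*} [CommRing R]

variable (R) in
/-- The class of the first variable. -/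
noncomputable def x : ModuliAlgebraE7 R := Ideal.Quotient.mk _ (X 0)

variable (R) in
/-- The class of the second variable. -/
noncomputable def y : ModuliAlgebraE7 R := Ideal.Quotient.mk _ (X 1)

theorem three_mul_x_sq_add_y_cube : 3 * x R ^ 2 + y R ^ 3 = 0 := by
  have mem : 3 * X 0 ^ 2 + X 1 ^ 3 ∈ Ideal.span (jacobianE7 R) := Ideal.subset_span (by simp)
  simpa only [x, y, map_add, map_mul, map_pow, map_ofNat] using Ideal.Quotient.eq_zero_iff_mem.2 mem

theorem isUnit_three (h3 : IsUnit (3 : R)) : IsUnit (3 : ModuliAlgebraE7 R) := by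
  simpa only [map_ofNat] using h3.map (algebraMap R (ModuliAlgebraE7 R))

theorem x_mul_y_sq (h3 : IsUnit (3 : R)) : x R * y R ^ 2 = 0 := by
  have mem : 3 * X 0 * X 1 ^ 2 ∈ Ideal.span (jacobianE7 R) := Ideal.subset_span (by simp)
  have three_mul : 3 * (x R * y R ^ 2) = 0 := by
    simpa only [x, y, map_mul, map_pow, map_ofNat, mul_assoc] using
      Ideal.Quotient.eq_zero_iff_mem.2 mem
  exact (isUnit_three h3).mul_right_eq_zero.1 three_mul

theorem x_cube (h3 : IsUnit (3 : R)) : x R ^ 3 = 0 := by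
  have three_mul : 3 * x R ^ 3 = 0 := by
    linear_combination x R * three_mul_x_sq_add_y_cube (R := R) - y R * x_mul_y_sq h3
  exact (isUnit_three h3).mul_right_eq_zero.1 three_mul

/-- The exponents `(i, j)` of the monomial basis `1, x, y, xy, y², x², x²y` of the moduli
algebra. -/
def basisExponent : Fin 7 → ℕ × ℕ :=
  ![(0, 0), (1, 0), (0, 1), (1, 1), (0, 2), (2, 0), (2, 1)]

variable (R) in
/-- The element with given coordinates with respect to the monomial basis. -/
noncomputable def ofCoords : (Fin 7 → R) →ₗ[R] ModuliAlgebraE7 R :=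
  Fintype.linearCombination R fun k ↦ x R ^ (basisExponent k).1 * y R ^ (basisExponent k).2

theorem ofCoords_apply (a : Fin 7 → R) :
    ofCoords R a = algebraMap R _ (a 0) + algebraMap R _ (a 1) * x R + algebraMap R _ (a 2) * y R +
      algebraMap R _ (a 3) * (x R * y R) + algebraMap R _ (a 4) * y R ^ 2 +
      algebraMap R _ (a 5) * x R ^ 2 + algebraMap R _ (a 6) * (x R ^ 2 * y R) := by
  have smul_eq (c : R) (z : ModuliAlgebraE7 R) : c • z = algebraMap R _ c * z :=
    Algebra.smul_def c z
  simp [ofCoords, basisExponent, Fintype.linearCombination_apply, Fin.sum_univ_succ, smul_eq,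
    add_assoc]

theorem x_mul_ofCoords (h3 : IsUnit (3 : R)) (a : Fin 7 → R) :
    x R * ofCoords R a = ofCoords R ![0, a 0, 0, a 2, 0, a 1, a 3] := by
  simp only [ofCoords_apply, Matrix.cons_val, Matrix.cons_val_zero, Matrix.cons_val_one, map_zero,
    zero_mul, zero_add, add_zero]
  linear_combination
    (algebraMap R _ (a 4)) * x_mul_y_sq h3 +
    (algebraMap R _ (a 5) + algebraMap R _ (a 6) * y R) * x_cube h3

theorem y_mul_ofCoords (h3 : IsUnit (3 : R)) (a : Fin 7 → R) :
    y R * ofCoords R a = ofCoords R ![0, 0, a 0, a 1, a 2, -3 * a 4, a 5] := by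
  have map_three : algebraMap R (ModuliAlgebraE7 R) 3 = 3 := map_ofNat _ 3
  simp only [ofCoords_apply, Matrix.cons_val, Matrix.cons_val_zero, Matrix.cons_val_one, map_zero,
    zero_mul, zero_add, add_zero, map_mul, map_neg, map_three]
  linear_combination
    (algebraMap R _ (a 3) + algebraMap R _ (a 6) * x R) * x_mul_y_sq h3 +
    algebraMap R _ (a 4) * three_mul_x_sq_add_y_cube (R := R)

theorem ofCoords_surjective (h3 : IsUnit (3 : R)) : Function.Surjective (ofCoords R) := by
  refine Ideal.Quotient.mk_surjective.forall.2 fun p ↦ ?_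
  change Ideal.Quotient.mk (Ideal.span (jacobianE7 R)) p ∈ (ofCoords R).range
  induction p using MvPolynomial.induction_on with
  | C c =>
    have mk_C : Ideal.Quotient.mk (Ideal.span (jacobianE7 R)) (C c) = algebraMap R _ c := rfl
    exact ⟨Pi.single 0 c, by simp [ofCoords_apply, mk_C]⟩
  | add p q hp hq => rw [map_add]; exact add_mem hp hq
  | mul_X p i hp =>
    obtain ⟨a, ha⟩ := hp
    rw [map_mul, ← ha, mul_comm]
    fin_cases i
    · exact ⟨_, (x_mul_ofCoords h3 a).symm⟩
    · exact ⟨_, (y_mul_ofCoords h3 a).symm⟩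

variable (R) in
/-- The coordinates of `xⁱyʲ` with respect to `1, x, y, xy, y², x², x²y`; recall `y³ = -3x²`. -/
def monomialCoords : ℕ → ℕ → Fin 7 → R
  | 0, 0 => Pi.single 0 1
  | 1, 0 => Pi.single 1 1
  | 0, 1 => Pi.single 2 1
  | 1, 1 => Pi.single 3 1
  | 0, 2 => Pi.single 4 1
  | 2, 0 => Pi.single 5 1
  | 2, 1 => Pi.single 6 1
  | 0, 3 => Pi.single 5 (-3)
  | 0, 4 => Pi.single 6 (-3)
  | _, _ => 0

theorem monomialCoords_relation_x (i j : ℕ) :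
    (3 : R) • monomialCoords R (i + 2) j + monomialCoords R i (j + 3) = 0 := by
  match i, j with
  | 0, 0 | 0, 1 | 0, j + 2 | i + 1, j => simp [monomialCoords, ← Pi.single_smul, ← Pi.single_add]

theorem monomialCoords_relation_y (i j : ℕ) : monomialCoords R (i + 1) (j + 2) = 0 := by
  simp [monomialCoords]

variable (R) in
/-- The coordinates of the class of a polynomial with respect to the monomial basis. -/
noncomputable def polynomialCoords : MvPolynomial (Fin 2) R →ₗ[R] (Fin 7 → R) :=
  (basisMonomials (Fin 2) R).constr R fun s ↦ monomialCoords R (s 0) (s 1)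

theorem polynomialCoords_monomial (s : Fin 2 →₀ ℕ) (c : R) :
    polynomialCoords R (monomial s c) = c • monomialCoords R (s 0) (s 1) := by
  have h : monomial s c = c • basisMonomials (Fin 2) R s := by simp [smul_monomial]
  rw [h, map_smul, polynomialCoords, Module.Basis.constr_basis]

theorem polynomialCoords_monomial_mul (s : Fin 2 →₀ ℕ) (c : R) (i j : ℕ) :
    polynomialCoords R (monomial s c * (X 0 ^ i * X 1 ^ j)) =
      c • monomialCoords R (s 0 + i) (s 1 + j) := by
  simp [X_pow_eq_monomial, monomial_mul, polynomialCoords_monomial]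

theorem polynomialCoords_mul_relation_x (p : MvPolynomial (Fin 2) R) :
    polynomialCoords R (p * (3 * X 0 ^ 2 + X 1 ^ 3)) = 0 := by
  induction p using MvPolynomial.induction_on' with
  | monomial s c =>
    have h := polynomialCoords_monomial_mul s c
    have expand : monomial s c * (3 * X 0 ^ 2 + X 1 ^ 3) =
        (3 : R) • (monomial s c * (X 0 ^ 2 * X 1 ^ 0)) + monomial s c * (X 0 ^ 0 * X 1 ^ 3) := by
      rw [smul_eq_C_mul, map_ofNat]; ring
    rw [expand, map_add, map_smul, h, h, smul_comm, ← smul_add, add_zero, add_zero,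
      monomialCoords_relation_x, smul_zero]
  | add p q hp hq => rw [add_mul, map_add, hp, hq, add_zero]

theorem polynomialCoords_mul_relation_y (p : MvPolynomial (Fin 2) R) :
    polynomialCoords R (p * (X 0 * X 1 ^ 2)) = 0 := by
  induction p using MvPolynomial.induction_on' with
  | monomial s c =>
    rw [← pow_one (X 0), polynomialCoords_monomial_mul, monomialCoords_relation_y, smul_zero]
  | add p q hp hq => rw [add_mul, map_add, hp, hq, add_zero]

variable (R) in
/-- The coordinates of an element of the moduli algebra with respect to the monomial basis. -/
noncomputable def coords : ModuliAlgebraE7 R →ₗ[R] (Fin 7 → R) :=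
  ((Ideal.span (jacobianE7 R)).restrictScalars R).liftQ (polynomialCoords R) fun p hp ↦ by
    obtain ⟨u, v, rfl⟩ := Ideal.mem_span_pair.1 hp
    have assoc : v * (3 * X 0 * X 1 ^ 2) = v * 3 * (X 0 * X 1 ^ 2) := by ring
    rw [LinearMap.mem_ker, map_add, polynomialCoords_mul_relation_x, assoc,
      polynomialCoords_mul_relation_y, add_zero]

theorem coords_x_pow_mul_y_pow (i j : ℕ) : coords R (x R ^ i * y R ^ j) = monomialCoords R i j := by
  change polynomialCoords R (X 0 ^ i * X 1 ^ j) = _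
  rw [← one_mul (X 0 ^ i * X 1 ^ j)]
  simpa using polynomialCoords_monomial_mul 0 (1 : R) i j

theorem monomialCoords_basisExponent (k : Fin 7) :
    monomialCoords R (basisExponent k).1 (basisExponent k).2 = Pi.single k 1 := by
  fin_cases k <;> rfl

theorem coords_ofCoords (a : Fin 7 → R) : coords R (ofCoords R a) = a := by
  simp only [ofCoords, Fintype.linearCombination_apply, map_sum, map_smul, coords_x_pow_mul_y_pow,
    monomialCoords_basisExponent, ← Pi.single_smul, smul_eq_mul, mul_one, Finset.univ_sum_single]

theorem ofCoords_injective : Function.Injective (ofCoords R) :=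
  Function.LeftInverse.injective coords_ofCoords

variable (R) in
/-- The coefficients, with respect to the monomial basis, of the derivation
`c₀ (3x ∂x + 2y ∂y) + c₁ (3xy ∂x + 2y² ∂y) + c₂ (2y² ∂x + 3x ∂y) + c₃ x² ∂x + c₄ x²y ∂x
+ c₅ xy ∂y + c₆ x² ∂y + c₇ x²y ∂y`. -/
def derivationCoords : (Fin 8 → R) →ₗ[R] Fin 2 → Fin 7 → R where
  toFun c := ![![0, 3 * c 0, 0, 3 * c 1, 2 * c 2, c 3, c 4],
    ![0, 3 * c 2, 2 * c 0, c 5, 2 * c 1, c 6, c 7]]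
  map_add' c d := by simp [mul_add]
  map_smul' r c := by simp [mul_left_comm]

/-- A left inverse of `derivationCoords`; it recovers `t` from `3t` and `2t` as their difference. -/
def derivationParams (w : Fin 2 → Fin 7 → R) : Fin 8 → R :=
  ![w 0 1 - w 1 2, w 0 3 - w 1 4, w 1 1 - w 0 4, w 0 5, w 0 6, w 1 3, w 1 5, w 1 6]

theorem derivationParams_derivationCoords (c : Fin 8 → R) :
    derivationParams (derivationCoords R c) = c := by
  ext k
  fin_cases k <;> simp [derivationParams, derivationCoords] <;> ring

theorem derivationCoords_injective : Function.Injective (derivationCoords R) :=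
  Function.LeftInverse.injective derivationParams_derivationCoords

theorem mem_range_derivationCoords (w : Fin 2 → Fin 7 → R) :
    w ∈ (derivationCoords R).range ↔
      w 0 0 = 0 ∧ w 0 2 = 0 ∧ w 1 0 = 0 ∧ 2 * w 0 1 = 3 * w 1 2 ∧ 2 * w 0 3 = 3 * w 1 4 ∧
        2 * w 1 1 = 3 * w 0 4 := by
  constructor
  · rintro ⟨c, rfl⟩
    refine ⟨rfl, rfl, rfl, ?_, ?_, ?_⟩ <;> exact mul_left_comm ..
  · rintro ⟨h00, h02, h10, h0112, h0314, h1104⟩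
    refine ⟨derivationParams w, ?_⟩
    ext i k
    fin_cases i <;> fin_cases k <;> simp [derivationCoords, derivationParams] <;> grind

theorem smul_eq_mk_mul (p : MvPolynomial (Fin 2) R) (z : ModuliAlgebraE7 R) :
    p • z = Ideal.Quotient.mk _ p * z :=
  Algebra.smul_def p z

theorem mkDerivation_relation_x (v : Fin 2 → ModuliAlgebraE7 R) :
    mkDerivation R v (3 * X 0 ^ 2 + X 1 ^ 3) = 3 * (2 * (x R * v 0) + y R * (y R * v 1)) := by
  have map_three : mkDerivation R v 3 = 0 := (mkDerivation R v).map_natCast 3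
  simp only [map_add, Derivation.leibniz, Derivation.leibniz_pow, mkDerivation_X, map_three,
    smul_eq_mk_mul, map_ofNat, map_pow, nsmul_eq_mul, x, y]
  push_cast
  ring

theorem mkDerivation_relation_y (v : Fin 2 → ModuliAlgebraE7 R) :
    mkDerivation R v (3 * X 0 * X 1 ^ 2) = 3 * (y R * (y R * v 0) + 2 * (x R * (y R * v 1))) := by
  have map_three : mkDerivation R v 3 = 0 := (mkDerivation R v).map_natCast 3
  simp only [map_mul, Derivation.leibniz, Derivation.leibniz_pow, mkDerivation_X, map_three,
    smul_eq_mk_mul, map_ofNat, map_pow, nsmul_eq_mul, x, y]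
  push_cast
  ring

theorem mkDerivation_mem_derivationsVanishingOn_iff (h3 : IsUnit (3 : R))
    (v : Fin 2 → ModuliAlgebraE7 R) :
    mkDerivation R v ∈ derivationsVanishingOn (jacobianE7 R) ↔
      2 * (x R * v 0) + y R * (y R * v 1) = 0 ∧
        y R * (y R * v 0) + 2 * (x R * (y R * v 1)) = 0 := by
  have vanishing_iff : mkDerivation R v ∈ derivationsVanishingOn (jacobianE7 R) ↔
      mkDerivation R v (3 * X 0 ^ 2 + X 1 ^ 3) = 0 ∧ mkDerivation R v (3 * X 0 * X 1 ^ 2) = 0 :=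
    Set.forall_mem_insert.trans (and_congr_right' forall_eq)
  rw [vanishing_iff, mkDerivation_relation_x, mkDerivation_relation_y,
    (isUnit_three h3).mul_right_eq_zero, (isUnit_three h3).mul_right_eq_zero]

theorem mkDerivation_ofCoords_mem_iff (h3 : IsUnit (3 : R)) (w : Fin 2 → Fin 7 → R) :
    mkDerivation R (fun i ↦ ofCoords R (w i)) ∈ derivationsVanishingOn (jacobianE7 R) ↔
      w ∈ (derivationCoords R).range := by
  have two_mul_ofCoords (a : Fin 7 → R) : 2 * ofCoords R a = ofCoords R ((2 : R) • a) := by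
    rw [two_mul, two_smul, map_add]
  rw [mkDerivation_mem_derivationsVanishingOn_iff h3, mem_range_derivationCoords]
  have linear_system :
      (2 * w 0 0 = 0 ∧ 2 * w 0 2 = 0 ∧ w 1 0 = 0 ∧ 2 * w 0 1 + -(3 * w 1 2) = 0 ∧
          2 * w 0 3 + -(3 * w 1 4) = 0) ∧
        2 * w 1 0 = 0 ∧ w 0 0 = 0 ∧ 3 * w 0 2 = 0 ∧ -(3 * w 0 4) + 2 * w 1 1 = 0 ↔
      w 0 0 = 0 ∧ w 0 2 = 0 ∧ w 1 0 = 0 ∧ 2 * w 0 1 = 3 * w 1 2 ∧ 2 * w 0 3 = 3 * w 1 4 ∧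
        2 * w 1 1 = 3 * w 0 4 := by
    grind
  simpa [x_mul_ofCoords h3, y_mul_ofCoords h3, two_mul_ofCoords, ← map_add,
    map_eq_zero_iff _ ofCoords_injective, _root_.funext_iff, Fin.forall_fin_succ]
    using linear_system

variable (R) in
/-- The derivation with the coefficients `derivationCoords R c`, as a derivation of the polynomial
ring. -/
noncomputable def derivationOfParams :
    (Fin 8 → R) →ₗ[R] Derivation R (MvPolynomial (Fin 2) R) (ModuliAlgebraE7 R) :=
  (mkDerivationEquiv R).toLinearMap ∘ₗ (ofCoords R).compLeft (Fin 2) ∘ₗ derivationCoords R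

theorem derivationOfParams_injective : Function.Injective (derivationOfParams R) :=
  (mkDerivationEquiv R).injective.comp <|
    ofCoords_injective.comp_left.comp derivationCoords_injective

theorem range_derivationOfParams (h3 : IsUnit (3 : R)) :
    (derivationOfParams R).range = derivationsVanishingOn (jacobianE7 R) := by
  ext D
  obtain ⟨v, rfl⟩ := (mkDerivationEquiv R).surjective D
  obtain ⟨w, rfl⟩ := (ofCoords_surjective h3).comp_left v
  refine Iff.trans ?_ (mkDerivation_ofCoords_mem_iff h3 w).symm
  exact exists_congr fun c ↦
    ((mkDerivationEquiv R).injective.comp ofCoords_injective.comp_left).eq_iff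

end ModuliAlgebraE7

open ModuliAlgebraE7 in
theorem finrank_derivations_E7_general {R : Type*} [CommRing R] [Nontrivial R]
    (h3 : IsUnit (3 : R)) :
    Module.finrank R (Derivation R (ModuliAlgebraE7 R) (ModuliAlgebraE7 R)) = 8 := by
  rw [(derivationQuotientEquiv (jacobianE7 R)).finrank_eq, ← range_derivationOfParams h3,
    LinearMap.finrank_range_of_inj derivationOfParams_injective, Module.finrank_fin_fun]

/-- The space of `ℂ`-linear derivations of the moduli algebra of the simple singularity
`E₇` has dimension `8`. -/
theorem finrank_derivations_E7 :
    Module.finrank ℂ (Derivation ℂ moduliE7 moduliE7) = 8 :=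
  finrank_derivations_E7_general (IsUnit.mk0 3 three_ne_zero)
end
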